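/- Let C be a regular Ord-category. The following statements are equivalent, and they characterise regular Ord-Mal'tsev categories: (i) for any congruences R,S: X ↬ X on an object X, the composite R∘S is a congruence on X; (ii) R∘S ≅ S∘R for any congruences R,S: X ↬ X; (iii) R∘S ≅ S∘R for any effective congruences R,S: X ↬ X; (iv) every ideal D: X ↬ Y satisfies D∘D^*∘D ≅ D; (v) every reflexive ideal R: X ↬ X is a congruence. -/

import Mathlib

open CategoryTheory

universe w v u

/-- An `Ord`-enrichment of a category: a preorder on each hom-set,
preserved by composition on both sides. -/
class OrdEnrichment (C : Type u) [Category.{v} C] : Type (max u v) where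
  ord : ∀ {X Y : C}, (X ⟶ Y) → (X ⟶ Y) → Prop
  ord_refl : ∀ {X Y : C} (f : X ⟶ Y), ord f f
  ord_trans : ∀ {X Y : C} {f g h : X ⟶ Y}, ord f g → ord g h → ord f h
  precomp_ord : ∀ {X Y Z : C} (e : X ⟶ Y) {f g : Y ⟶ Z}, ord f g → ord (e ≫ f) (e ≫ g)
  postcomp_ord : ∀ {X Y Z : C} {f g : X ⟶ Y} (h : Y ⟶ Z), ord f g → ord (f ≫ h) (g ≫ h)

/-- The preorder on hom-sets of an `Ord`-category. -/
def homLe {C : Type u} [Category.{v} C] [OrdEnrichment C] {X Y : C} (f g : X ⟶ Y) : Prop :=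
  OrdEnrichment.ord f g

infixl:50 " ≼ " => homLe

section

variable {C : Type u} [Category.{v} C] [OrdEnrichment C]

/-- A full (ff-) morphism. -/
def IsFF {X Y : C} (m : X ⟶ Y) : Prop :=
  ∀ {A : C} (a a' : A ⟶ X), (a ≫ m) ≼ (a' ≫ m) → a ≼ a'

/-- An ff-monomorphism: a full monomorphism. -/
def IsFFMono {X Y : C} (m : X ⟶ Y) : Prop := IsFF m ∧ Mono m

/-- An so-morphism: a morphism left orthogonal to every ff-monomorphism. -/
def IsSO {A B : C} (e : A ⟶ B) : Prop :=
  ∀ {X Y : C} (m : X ⟶ Y), IsFFMono m → ∀ (u : A ⟶ X) (v : B ⟶ Y),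
    u ≫ m = e ≫ v → ∃ d : B ⟶ X, e ≫ d = u ∧ d ≫ m = v

/-- The (strict) comma object square for the ordered pair `(f, g)`. -/
structure IsCommaSq {X Y Z : C} (f : X ⟶ Y) (g : Z ⟶ Y) (P : C)
    (π₁ : P ⟶ X) (π₂ : P ⟶ Z) : Prop where
  le : (π₁ ≫ f) ≼ (π₂ ≫ g)
  lift : ∀ {A : C} (α : A ⟶ X) (β : A ⟶ Z), (α ≫ f) ≼ (β ≫ g) →
    ∃! h : A ⟶ P, h ≫ π₁ = α ∧ h ≫ π₂ = β
  lift_ord : ∀ {A : C} {h h' : A ⟶ P}, (h ≫ π₁) ≼ (h' ≫ π₁) → (h ≫ π₂) ≼ (h' ≫ π₂) → h ≼ h'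

/-- A 2-pullback square (pullback with the `Ord`-enriched universal property). -/
structure Is2Pullback {X Y Z : C} (f : X ⟶ Z) (g : Y ⟶ Z) (P : C)
    (p : P ⟶ X) (q : P ⟶ Y) : Prop where
  comm : p ≫ f = q ≫ g
  lift : ∀ {A : C} (a : A ⟶ X) (b : A ⟶ Y), a ≫ f = b ≫ g →
    ∃! h : A ⟶ P, h ≫ p = a ∧ h ≫ q = b
  lift_ord : ∀ {A : C} {h h' : A ⟶ P}, (h ≫ p) ≼ (h' ≫ p) → (h ≫ q) ≼ (h' ≫ q) → h ≼ h'

/-- A binary 2-product. -/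
structure Is2Product (X Y : C) (P : C) (p : P ⟶ X) (q : P ⟶ Y) : Prop where
  lift : ∀ {A : C} (a : A ⟶ X) (b : A ⟶ Y), ∃! h : A ⟶ P, h ≫ p = a ∧ h ≫ q = b
  lift_ord : ∀ {A : C} {h h' : A ⟶ P}, (h ≫ p) ≼ (h' ≫ p) → (h ≫ q) ≼ (h' ≫ q) → h ≼ h'

/-- A 2-equalizer. -/
structure Is2Equalizer {X Y : C} (f g : X ⟶ Y) (E : C) (i : E ⟶ X) : Prop where
  comm : i ≫ f = i ≫ g
  lift : ∀ {A : C} (a : A ⟶ X), a ≫ f = a ≫ g → ∃! h : A ⟶ E, h ≫ i = a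
  lift_ord : ∀ {A : C} {h h' : A ⟶ E}, (h ≫ i) ≼ (h' ≫ i) → h ≼ h'

/-- A bicoinserter of a parallel pair. -/
structure IsBicoinserter {X A E : C} (a b : X ⟶ A) (e : A ⟶ E) : Prop where
  le : (a ≫ e) ≼ (b ≫ e)
  desc : ∀ {F : C} (f : A ⟶ F), (a ≫ f) ≼ (b ≫ f) →
    ∃ t : E ⟶ F, (e ≫ t) ≼ f ∧ f ≼ (e ≫ t)
  desc_ord : ∀ {F : C} {f f' : A ⟶ F} {t t' : E ⟶ F},
    (e ≫ t) ≼ f → f ≼ (e ≫ t) → (e ≫ t') ≼ f' → f' ≼ (e ≫ t') → f ≼ f' → t ≼ t'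

/-- A relation from `X` to `Y` in an `Ord`-category: a jointly ff-monomorphic span. -/
structure RelStr (X Y : C) : Type (max u v) where
  obj : C
  p : obj ⟶ X
  q : obj ⟶ Y
  jointly_ff : ∀ {A : C} (a a' : A ⟶ obj), (a ≫ p) ≼ (a' ≫ p) → (a ≫ q) ≼ (a' ≫ q) → a ≼ a'
  jointly_mono : ∀ {A : C} (a a' : A ⟶ obj), a ≫ p = a' ≫ p → a ≫ q = a' ≫ q → a = a'

/-- `(x, y) ∈_A R`. -/
def RelStr.Mem {X Y : C} (R : RelStr X Y) {A : C} (x : A ⟶ X) (y : A ⟶ Y) : Prop :=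
  ∃ h : A ⟶ R.obj, h ≫ R.p = x ∧ h ≫ R.q = y

/-- `R ⊆ S`: `R` factors through `S` (over `X × Y`). -/
def RelStr.Sub {X Y : C} (R S : RelStr X Y) : Prop :=
  ∃ φ : R.obj ⟶ S.obj, φ ≫ S.p = R.p ∧ φ ≫ S.q = R.q

/-- `R ≅ S`: mutual factorisation. -/
def RelStr.Iso {X Y : C} (R S : RelStr X Y) : Prop := R.Sub S ∧ S.Sub R

/-- The opposite relation `R°`. -/
def RelStr.op {X Y : C} (R : RelStr X Y) : RelStr Y X where
  obj := R.obj
  p := R.q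
  q := R.p
  jointly_ff := fun a a' h1 h2 => R.jointly_ff a a' h2 h1
  jointly_mono := fun a a' h1 h2 => R.jointly_mono a a' h2 h1

/-- A relation is an (order) ideal when it is closed under lowering the first
coordinate and raising the second coordinate. -/
def IsIdealRel {X Y : C} (R : RelStr X Y) : Prop :=
  ∀ {A : C} (x x' : A ⟶ X) (y y' : A ⟶ Y), x' ≼ x → R.Mem x y → y ≼ y' → R.Mem x' y'

/-- The relation `f_♯` given by the span `(1_X, f)`. -/
def sharpRel {X Y : C} (f : X ⟶ Y) : RelStr X Y where
  obj := X
  p := 𝟙 X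
  q := f
  jointly_ff := fun a a' h1 _ => by simpa using h1
  jointly_mono := fun a a' h1 _ => by simpa using h1

/-- The relation `f°`, the opposite of `f_♯`. -/
def cosharpRel {X Y : C} (f : X ⟶ Y) : RelStr Y X := (sharpRel f).op

/-- `M` is the meet (intersection) `R ∧ S` of two relations. -/
def IsMeetRel {X Y : C} (R S M : RelStr X Y) : Prop :=
  M.Sub R ∧ M.Sub S ∧
    ∀ {A : C} (x : A ⟶ X) (y : A ⟶ Y), R.Mem x y → S.Mem x y → M.Mem x y

/-- `T` is the composite `S ∘ R` of the relations `R : X ↬ Y` and `S : Y ↬ Z`,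
obtained via the (so-morphism, ff-monomorphism) factorisation of the span
given by the 2-pullback over the middle object. -/
def IsCompositeRel {X Y Z : C} (R : RelStr X Y) (S : RelStr Y Z) (T : RelStr X Z) : Prop :=
  ∃ (P : C) (p₁ : P ⟶ R.obj) (p₂ : P ⟶ S.obj) (e : P ⟶ T.obj),
    Is2Pullback R.q S.p P p₁ p₂ ∧ IsSO e ∧ e ≫ T.p = p₁ ≫ R.p ∧ e ≫ T.q = p₂ ≫ S.q

/-- `R` is the ideal `f_* = f / 1_Y : X ↬ Y`. -/
def IsStarRel {X Y : C} (f : X ⟶ Y) (R : RelStr X Y) : Prop :=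
  IsCommaSq f (𝟙 Y) R.obj R.p R.q

/-- `R` is the ideal `f^* = 1_Y / f : Y ↬ X`. -/
def IsCostarRel {X Y : C} (f : X ⟶ Y) (R : RelStr Y X) : Prop :=
  IsCommaSq (𝟙 Y) f R.obj R.p R.q

/-- `R` is the identity ideal `I_X = 1_X / 1_X`. -/
def IsIdRel (X : C) (R : RelStr X X) : Prop :=
  IsCommaSq (𝟙 X) (𝟙 X) R.obj R.p R.q

/-- `S` is the 2-pullback of the relation `R ↣ X × Y` along `f × g`. -/
def IsRelPullback {X Y U V : C} (R : RelStr X Y) (f : U ⟶ X) (g : V ⟶ Y)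
    (S : RelStr U V) : Prop :=
  ∃ h : S.obj ⟶ R.obj, h ≫ R.p = S.p ≫ f ∧ h ≫ R.q = S.q ≫ g ∧
    ∀ {A : C} (a : A ⟶ U) (b : A ⟶ V) (c : A ⟶ R.obj),
      c ≫ R.p = a ≫ f → c ≫ R.q = b ≫ g →
      ∃ d : A ⟶ S.obj, d ≫ S.p = a ∧ d ≫ S.q = b ∧ d ≫ h = c

/-- A binary 2-coproduct. -/
structure Is2Coproduct (X Y : C) (P : C) (i : X ⟶ P) (j : Y ⟶ P) : Prop where
  desc : ∀ {A : C} (a : X ⟶ A) (b : Y ⟶ A), ∃! h : P ⟶ A, i ≫ h = a ∧ j ≫ h = b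
  desc_ord : ∀ {A : C} {h h' : P ⟶ A}, (i ≫ h) ≼ (i ≫ h') → (j ≫ h) ≼ (j ≫ h') → h ≼ h'

/-- A ternary 2-coproduct. -/
structure Is3Coproduct (X Y Z : C) (P : C) (i : X ⟶ P) (j : Y ⟶ P) (k : Z ⟶ P) : Prop where
  desc : ∀ {A : C} (a : X ⟶ A) (b : Y ⟶ A) (c : Z ⟶ A),
    ∃! h : P ⟶ A, i ≫ h = a ∧ j ≫ h = b ∧ k ≫ h = c
  desc_ord : ∀ {A : C} {h h' : P ⟶ A},
    (i ≫ h) ≼ (i ≫ h') → (j ≫ h) ≼ (j ≫ h') → (k ≫ h) ≼ (k ≫ h') → h ≼ h'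

/-- Reflexivity of a relation on `X`: the diagonal factors through it. -/
def ReflexiveRel {X : C} (R : RelStr X X) : Prop := R.Mem (𝟙 X) (𝟙 X)

/-- Transitivity of a relation on `X`: `R ∘ R ⊆ R`. -/
def TransitiveRel {X : C} (R : RelStr X X) : Prop :=
  ∀ T : RelStr X X, IsCompositeRel R R T → T.Sub R

/-- A congruence: a reflexive and transitive ideal. -/
def IsCongruence {X : C} (R : RelStr X X) : Prop :=
  IsIdealRel R ∧ ReflexiveRel R ∧ TransitiveRel R

/-- An effective congruence: `R ≅ f^* ∘ f_*` for some morphism `f`. -/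
def EffectiveCongruence {X : C} (R : RelStr X X) : Prop :=
  ∃ (Y : C) (f : X ⟶ Y) (Fstar : RelStr X Y) (Fco : RelStr Y X) (T : RelStr X X),
    IsStarRel f Fstar ∧ IsCostarRel f Fco ∧ IsCompositeRel Fstar Fco T ∧ R.Iso T

/-- The `Ord`-enriched difunctionality property of a relation. -/
def OrdDifunctional {X Y : C} (D : RelStr X Y) : Prop :=
  ∀ {A : C} (x u u' : A ⟶ X) (y y' v : A ⟶ Y),
    D.Mem x y → y ≼ y' → D.Mem u y' → u ≼ u' → D.Mem u' v → D.Mem x v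

end

/-- A regular `Ord`-category: finite weighted limits, an
(so-morphism, ff-monomorphism) factorisation system, so-morphisms stable under
2-pullbacks, and every so-morphism the bicoinserter of its comma object projections. -/
structure IsRegularOrd (C : Type u) [Category.{v} C] [OrdEnrichment C] : Prop where
  hasTerminal : ∃ T : C, ∀ A : C, ∃ f : A ⟶ T, ∀ g : A ⟶ T, g = f
  has2Products : ∀ X Y : C, ∃ (P : C) (p : P ⟶ X) (q : P ⟶ Y), Is2Product X Y P p q
  has2Equalizers : ∀ {X Y : C} (f g : X ⟶ Y), ∃ (E : C) (i : E ⟶ X), Is2Equalizer f g E i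
  has2Pullbacks : ∀ {X Y Z : C} (f : X ⟶ Z) (g : Y ⟶ Z),
    ∃ (P : C) (p : P ⟶ X) (q : P ⟶ Y), Is2Pullback f g P p q
  hasCommaObjects : ∀ {X Y Z : C} (f : X ⟶ Y) (g : Z ⟶ Y),
    ∃ (P : C) (p : P ⟶ X) (q : P ⟶ Z), IsCommaSq f g P p q
  fact : ∀ {X Y : C} (f : X ⟶ Y), ∃ (I : C) (e : X ⟶ I) (m : I ⟶ Y),
    IsSO e ∧ IsFFMono m ∧ e ≫ m = f
  so_pullback_stable : ∀ {X Y Z P : C} (f : X ⟶ Z) (g : Y ⟶ Z) (p : P ⟶ X) (q : P ⟶ Y),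
    Is2Pullback f g P p q → IsSO g → IsSO p
  so_bicoinserter : ∀ {A B P : C} (e : A ⟶ B), IsSO e →
    ∀ (π₁ π₂ : P ⟶ A), IsCommaSq e e P π₁ π₂ → IsBicoinserter π₁ π₂ e

/-- An `Ord`-Mal'tsev category: every ideal is `Ord`-difunctional. -/
def IsOrdMaltsev (C : Type u) [Category.{v} C] [OrdEnrichment C] : Prop :=
  ∀ (X Y : C) (D : RelStr X Y), IsIdealRel D → OrdDifunctional D

/-- An `Ord`-W-Mal'tsev object: every ideal is `Ord`-difunctional with respect to
generalised elements with domain `Y`. -/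
def IsOrdWMaltsevObj {C : Type u} [Category.{v} C] [OrdEnrichment C] (Y : C) : Prop :=
  ∀ (X Z : C) (R : RelStr X Z), IsIdealRel R →
    ∀ (x u u' : Y ⟶ X) (z z' v : Y ⟶ Z),
      R.Mem x z → z ≼ z' → R.Mem u z' → u ≼ u' → R.Mem u' v → R.Mem x v


section Statement15

variable (C : Type u) [Category.{v} C] [OrdEnrichment C]

/-- (i) the composite of two congruences is a congruence. -/
def CongruencesCompose : Prop :=
  ∀ (X : C) (R S : RelStr X X), IsCongruence R → IsCongruence S →
    ∀ T : RelStr X X, IsCompositeRel S R T → IsCongruence T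

/-- (ii) congruences 2-permute. -/
def CongruencesPermute : Prop :=
  ∀ (X : C) (R S : RelStr X X), IsCongruence R → IsCongruence S →
    ∀ T T' : RelStr X X, IsCompositeRel S R T → IsCompositeRel R S T' → T.Iso T'

/-- (iii) effective congruences 2-permute. -/
def EffectiveCongruencesPermute : Prop :=
  ∀ (X : C) (R S : RelStr X X),
    IsCongruence R → EffectiveCongruence R → IsCongruence S → EffectiveCongruence S →
    ∀ T T' : RelStr X X, IsCompositeRel S R T → IsCompositeRel R S T' → T.Iso T'

/-- (iv) every ideal `D` satisfies `D ∘ D^* ∘ D ≅ D`. -/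
def IdealsDifunctional : Prop :=
  ∀ (X Y : C) (D : RelStr X Y), IsIdealRel D →
    ∀ (D1star : RelStr D.obj X) (D2co : RelStr Y D.obj) (Dupper : RelStr Y X)
      (U1 : RelStr X X) (U2 : RelStr X Y),
      IsStarRel D.p D1star → IsCostarRel D.q D2co →
      IsCompositeRel D2co D1star Dupper →
      IsCompositeRel D Dupper U1 → IsCompositeRel U1 D U2 → U2.Iso D

/-- (v) every reflexive ideal is a congruence. -/
def ReflexiveIdealsAreCongruences : Prop :=
  ∀ (X : C) (R : RelStr X X), IsIdealRel R → ReflexiveRel R → IsCongruence R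

/-!
A morphism `A ⟶ X` is treated as a generalised element of `X`, and so-morphisms as covers: by
orthogonality, membership in a relation can be checked after precomposing with an so-morphism, so
`(x, z)` lies in a composite exactly when a middle element exists on some cover. Inclusions of
composites therefore become implications between generalised elements; in particular
`D ∘ D^* ∘ D ⊆ D` spells out difunctionality of `D`.

Now let `⟨d₁, d₂⟩` be an ideal `D` with elements `a`, `b`, `d` satisfying `d₂ a ≼ d₂ b` and
`d₁ b ≼ d₁ d`; difunctionality asks for `(d₁ a, d₂ d) ∈ D`. If the kernel congruences of `d₁` and
`d₂` permute, there is locally some `w` with `d₁ a ≼ d₁ w` and `d₂ w ≼ d₂ d`, which suffices as `D`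
is an ideal. If reflexive ideals are transitive, use instead the reflexive ideal on `D` relating `a`
to `d` when `(d₁ a, d₂ d) ∈ D`: it relates `a` to `b` and `b` to `d`.
-/

section

variable {C}

theorem homLe.refl {X Y : C} (f : X ⟶ Y) : f ≼ f :=
  OrdEnrichment.ord_refl f

theorem homLe.trans {X Y : C} {f g h : X ⟶ Y} (hfg : f ≼ g) (hgh : g ≼ h) : f ≼ h :=
  OrdEnrichment.ord_trans hfg hgh

theorem homLe.precomp {X Y Z : C} {f g : Y ⟶ Z} (h : f ≼ g) (e : X ⟶ Y) : e ≫ f ≼ e ≫ g :=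
  OrdEnrichment.precomp_ord e h

theorem homLe.postcomp {X Y Z : C} {f g : X ⟶ Y} (h : f ≼ g) (k : Y ⟶ Z) : f ≫ k ≼ g ≫ k :=
  OrdEnrichment.postcomp_ord k h

theorem Is2Product.hom_ext {X Y P : C} {fst : P ⟶ X} {snd : P ⟶ Y}
    (hP : Is2Product X Y P fst snd) {A : C} {a a' : A ⟶ P} (h₁ : a ≫ fst = a' ≫ fst)
    (h₂ : a ≫ snd = a' ≫ snd) : a = a' :=
  (hP.lift _ _).unique ⟨rfl, rfl⟩ ⟨h₁.symm, h₂.symm⟩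

theorem Is2Pullback.hom_ext {X Y Z P : C} {f : X ⟶ Z} {g : Y ⟶ Z} {p : P ⟶ X} {q : P ⟶ Y}
    (hP : Is2Pullback f g P p q) {A : C} {a a' : A ⟶ P} (h₁ : a ≫ p = a' ≫ p)
    (h₂ : a ≫ q = a' ≫ q) : a = a' :=
  (hP.lift (a ≫ p) (a ≫ q) (by simp only [Category.assoc, hP.comm])).unique
    ⟨rfl, rfl⟩ ⟨h₁.symm, h₂.symm⟩

theorem IsCommaSq.hom_ext {X Y Z P : C} {f : X ⟶ Y} {g : Z ⟶ Y} {p : P ⟶ X} {q : P ⟶ Z}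
    (hP : IsCommaSq f g P p q) {A : C} {a a' : A ⟶ P} (h₁ : a ≫ p = a' ≫ p)
    (h₂ : a ≫ q = a' ≫ q) : a = a' :=
  (hP.lift (a ≫ p) (a ≫ q) (by simpa only [Category.assoc] using hP.le.precomp a)).unique
    ⟨rfl, rfl⟩ ⟨h₁.symm, h₂.symm⟩

theorem Is2Pullback.isFFMono_fst {X Y Z P : C} {f : X ⟶ Z} {m : Y ⟶ Z} {p : P ⟶ X} {q : P ⟶ Y}
    (hP : Is2Pullback f m P p q) (hm : IsFFMono m) : IsFFMono p := by
  refine ⟨fun a a' h => hP.lift_ord h (hm.1 _ _ ?_), ⟨fun a a' h => hP.hom_ext h ?_⟩⟩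
  · simpa only [Category.assoc, hP.comm] using h.postcomp f
  · have := hm.2
    rw [← cancel_mono m, Category.assoc, Category.assoc, ← hP.comm, reassoc_of% h]

namespace RelStr

theorem Mem.precomp {X Y A B : C} {R : RelStr X Y} {x : A ⟶ X} {y : A ⟶ Y} (h : R.Mem x y)
    (c : B ⟶ A) : R.Mem (c ≫ x) (c ≫ y) := by
  obtain ⟨k, rfl, rfl⟩ := h
  exact ⟨c ≫ k, Category.assoc _ _ _, Category.assoc _ _ _⟩

theorem Sub.mem {X Y : C} {R S : RelStr X Y} (h : R.Sub S) {A : C} {x : A ⟶ X} {y : A ⟶ Y}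
    (hxy : R.Mem x y) : S.Mem x y := by
  obtain ⟨φ, hp, hq⟩ := h
  obtain ⟨k, rfl, rfl⟩ := hxy
  exact ⟨k ≫ φ, by rw [Category.assoc, hp], by rw [Category.assoc, hq]⟩

theorem sub_of_forall_mem {X Y : C} {R S : RelStr X Y}
    (h : ∀ {A : C} (k : A ⟶ R.obj), S.Mem (k ≫ R.p) (k ≫ R.q)) : R.Sub S := by
  obtain ⟨φ, hp, hq⟩ := h (𝟙 R.obj)
  exact ⟨φ, hp.trans (Category.id_comp _), hq.trans (Category.id_comp _)⟩

theorem isFFMono_of_comp_eq {X Y P : C} (R : RelStr X Y) {fst : P ⟶ X} {snd : P ⟶ Y}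
    {m : R.obj ⟶ P} (hp : m ≫ fst = R.p) (hq : m ≫ snd = R.q) : IsFFMono m := by
  refine ⟨fun a a' h => R.jointly_ff a a' ?_ ?_, ⟨fun a a' h => R.jointly_mono a a' ?_ ?_⟩⟩
  · simpa only [Category.assoc, hp] using h.postcomp fst
  · simpa only [Category.assoc, hq] using h.postcomp snd
  · rw [← hp, reassoc_of% h]
  · rw [← hq, reassoc_of% h]

/-- The relation from `X` to `Y` represented by an ff-monomorphism into a 2-product of `X` and
`Y`. -/
def ofFFMono {X Y P M : C} {fst : P ⟶ X} {snd : P ⟶ Y} (hP : Is2Product X Y P fst snd) (m : M ⟶ P)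
    (hm : IsFFMono m) : RelStr X Y where
  obj := M
  p := m ≫ fst
  q := m ≫ snd
  jointly_ff a a' h₁ h₂ :=
    hm.1 a a' (hP.lift_ord (by simpa only [Category.assoc]) (by simpa only [Category.assoc]))
  jointly_mono a a' h₁ h₂ :=
    hm.2.right_cancellation a a'
      (hP.hom_ext (by simpa only [Category.assoc]) (by simpa only [Category.assoc]))

end RelStr

theorem ReflexiveRel.mem {X A : C} {R : RelStr X X} (h : ReflexiveRel R) (x : A ⟶ X) :
    R.Mem x x := by
  simpa only [Category.comp_id] using h.precomp x

theorem IsCommaSq.mem_iff {X Y Z : C} {f : X ⟶ Y} {g : Z ⟶ Y} {R : RelStr X Z}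
    (hR : IsCommaSq f g R.obj R.p R.q) {A : C} {a : A ⟶ X} {b : A ⟶ Z} :
    R.Mem a b ↔ a ≫ f ≼ b ≫ g := by
  refine ⟨?_, fun h => (hR.lift a b h).exists⟩
  rintro ⟨k, rfl, rfl⟩
  simpa only [Category.assoc] using hR.le.precomp k

theorem IsStarRel.mem_iff {X Y : C} {f : X ⟶ Y} {R : RelStr X Y} (hR : IsStarRel f R) {A : C}
    {x : A ⟶ X} {y : A ⟶ Y} : R.Mem x y ↔ x ≫ f ≼ y := by
  simpa only [Category.comp_id] using IsCommaSq.mem_iff hR (a := x) (b := y)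

theorem IsCostarRel.mem_iff {X Y : C} {f : X ⟶ Y} {R : RelStr Y X} (hR : IsCostarRel f R) {A : C}
    {y : A ⟶ Y} {x : A ⟶ X} : R.Mem y x ↔ y ≼ x ≫ f := by
  simpa only [Category.comp_id] using IsCommaSq.mem_iff hR (a := y) (b := x)

theorem IsRelPullback.mem_iff {X Y U V : C} {R : RelStr X Y} {f : U ⟶ X} {g : V ⟶ Y}
    {S : RelStr U V} (hS : IsRelPullback R f g S) {A : C} {a : A ⟶ U} {b : A ⟶ V} :
    S.Mem a b ↔ R.Mem (a ≫ f) (b ≫ g) := by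
  obtain ⟨h, hp, hq, lift⟩ := hS
  constructor
  · rintro ⟨k, rfl, rfl⟩
    exact ⟨k ≫ h, by simp only [Category.assoc, hp], by simp only [Category.assoc, hq]⟩
  · rintro ⟨c, hcp, hcq⟩
    obtain ⟨d, hdp, hdq, -⟩ := lift a b c hcp hcq
    exact ⟨d, hdp, hdq⟩

theorem IsRelPullback.isIdealRel {X Y U V : C} {R : RelStr X Y} {f : U ⟶ X} {g : V ⟶ Y}
    {S : RelStr U V} (hS : IsRelPullback R f g S) (hR : IsIdealRel R) : IsIdealRel S :=
  fun _ _ _ _ hx h hy =>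
    hS.mem_iff.2 (hR _ _ _ _ (hx.postcomp f) (hS.mem_iff.1 h) (hy.postcomp g))

theorem IsCompositeRel.mem {X Y Z : C} {R : RelStr X Y} {S : RelStr Y Z} {T : RelStr X Z}
    (hT : IsCompositeRel R S T) {A : C} {x : A ⟶ X} {y : A ⟶ Y} {z : A ⟶ Z} (hxy : R.Mem x y)
    (hyz : S.Mem y z) : T.Mem x z := by
  obtain ⟨P, p₁, p₂, e, hP, -, hep, heq⟩ := hT
  obtain ⟨k, rfl, rfl⟩ := hxy
  obtain ⟨l, hl, rfl⟩ := hyz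
  obtain ⟨t, ⟨rfl, rfl⟩, -⟩ := hP.lift k l hl.symm
  exact ⟨t ≫ e, by simp only [Category.assoc, hep], by simp only [Category.assoc, heq]⟩

/-- `K` is the kernel congruence `f / f` of `f`, which relates `a` to `b` when `f a ≼ f b`. -/
def IsKernelRel {X Y : C} (f : X ⟶ Y) (K : RelStr X X) : Prop :=
  IsCommaSq f f K.obj K.p K.q

theorem IsKernelRel.mem_iff {X Y : C} {f : X ⟶ Y} {K : RelStr X X} (hK : IsKernelRel f K) {A : C}
    {a b : A ⟶ X} : K.Mem a b ↔ a ≫ f ≼ b ≫ f :=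
  IsCommaSq.mem_iff hK

/-- `E` is the ideal `D^* = (d₁)_* ∘ (d₂)^*` associated with the relation `D = ⟨d₁, d₂⟩`. -/
def IsUpperStarRel {X Y : C} (D : RelStr X Y) (E : RelStr Y X) : Prop :=
  ∃ (F : RelStr D.obj X) (G : RelStr Y D.obj),
    IsStarRel D.p F ∧ IsCostarRel D.q G ∧ IsCompositeRel G F E

theorem IsUpperStarRel.mem {X Y : C} {D : RelStr X Y} {E : RelStr Y X}
    (hE : IsUpperStarRel D E) {A : C} {y : A ⟶ Y} {x : A ⟶ X} {b : A ⟶ D.obj}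
    (hy : y ≼ b ≫ D.q) (hx : b ≫ D.p ≼ x) : E.Mem y x := by
  obtain ⟨F, G, hF, hG, hGF⟩ := hE
  exact hGF.mem (hG.mem_iff.2 hy) (hF.mem_iff.2 hx)

theorem IsUpperStarRel.sub_composite {X Y : C} {D : RelStr X Y} {E : RelStr Y X} {U : RelStr X X}
    {V : RelStr X Y} (hE : IsUpperStarRel D E) (hU : IsCompositeRel D E U)
    (hV : IsCompositeRel U D V) : D.Sub V := by
  refine RelStr.sub_of_forall_mem fun k => ?_
  have hk : D.Mem (k ≫ D.p) (k ≫ D.q) := ⟨k, rfl, rfl⟩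
  exact hV.mem (hU.mem hk (hE.mem (.refl _) (.refl _))) hk

end

/-- The fragment of regularity on which the calculus of ideals rests: binary 2-products,
2-pullbacks, comma objects and (so-morphism, ff-monomorphism) factorisations stable under
2-pullback. In contrast to `IsRegularOrd`, so-morphisms need not be bicoinserters. -/
class HasIdealCalculus : Prop where
  has2Products : ∀ X Y : C, ∃ (P : C) (p : P ⟶ X) (q : P ⟶ Y), Is2Product X Y P p q
  has2Pullbacks : ∀ {X Y Z : C} (f : X ⟶ Z) (g : Y ⟶ Z),
    ∃ (P : C) (p : P ⟶ X) (q : P ⟶ Y), Is2Pullback f g P p q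
  hasCommaObjects : ∀ {X Y Z : C} (f : X ⟶ Y) (g : Z ⟶ Y),
    ∃ (P : C) (p : P ⟶ X) (q : P ⟶ Z), IsCommaSq f g P p q
  fact : ∀ {X Y : C} (f : X ⟶ Y), ∃ (I : C) (e : X ⟶ I) (m : I ⟶ Y),
    IsSO e ∧ IsFFMono m ∧ e ≫ m = f
  so_pullback_stable : ∀ {X Y Z P : C} (f : X ⟶ Z) (g : Y ⟶ Z) (p : P ⟶ X) (q : P ⟶ Y),
    Is2Pullback f g P p q → IsSO g → IsSO p

section

variable {C}

theorem IsRegularOrd.hasIdealCalculus (hC : IsRegularOrd C) : HasIdealCalculus C where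
  has2Products := hC.has2Products
  has2Pullbacks := hC.has2Pullbacks
  hasCommaObjects := hC.hasCommaObjects
  fact := hC.fact
  so_pullback_stable := hC.so_pullback_stable

variable [HasIdealCalculus C]

theorem RelStr.mem_of_isSO {X Y A B : C} (R : RelStr X Y) {c : B ⟶ A} (hc : IsSO c) {x : A ⟶ X}
    {y : A ⟶ Y} (h : R.Mem (c ≫ x) (c ≫ y)) : R.Mem x y := by
  obtain ⟨P, fst, snd, hP⟩ := HasIdealCalculus.has2Products X Y
  obtain ⟨m, ⟨hmp, hmq⟩, -⟩ := hP.lift R.p R.q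
  obtain ⟨w, ⟨rfl, rfl⟩, -⟩ := hP.lift x y
  obtain ⟨k, hkp, hkq⟩ := h
  have square : k ≫ m = c ≫ w :=
    hP.hom_ext (by rw [Category.assoc, hmp, hkp, Category.assoc])
      (by rw [Category.assoc, hmq, hkq, Category.assoc])
  obtain ⟨d, -, rfl⟩ := hc m (R.isFFMono_of_comp_eq hmp hmq) k w square
  exact ⟨d, by rw [Category.assoc, hmp], by rw [Category.assoc, hmq]⟩

theorem exists_isRelPullback {X Y U V : C} (R : RelStr X Y) (f : U ⟶ X) (g : V ⟶ Y) :
    ∃ S : RelStr U V, IsRelPullback R f g S := by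
  obtain ⟨Q, fst, snd, hQ⟩ := HasIdealCalculus.has2Products X Y
  obtain ⟨Q', fst', snd', hQ'⟩ := HasIdealCalculus.has2Products U V
  obtain ⟨m, ⟨hmp, hmq⟩, -⟩ := hQ.lift R.p R.q
  obtain ⟨fg, ⟨hf, hg⟩, -⟩ := hQ.lift (fst' ≫ f) (snd' ≫ g)
  obtain ⟨P, p, h, hP⟩ := HasIdealCalculus.has2Pullbacks fg m
  have hp : IsFFMono p := hP.isFFMono_fst (R.isFFMono_of_comp_eq hmp hmq)
  refine ⟨.ofFFMono hQ' p hp, h, ?_, ?_, fun a b c hca hcb => ?_⟩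
  · simp only [RelStr.ofFFMono, Category.assoc, ← hmp, ← hf, reassoc_of% hP.comm]
  · simp only [RelStr.ofFFMono, Category.assoc, ← hmq, ← hg, reassoc_of% hP.comm]
  · obtain ⟨ab, ⟨rfl, rfl⟩, -⟩ := hQ'.lift a b
    have square : ab ≫ fg = c ≫ m :=
      hQ.hom_ext (by simp only [Category.assoc, hf, hmp, hca])
        (by simp only [Category.assoc, hg, hmq, hcb])
    obtain ⟨d, ⟨rfl, rfl⟩, -⟩ := hP.lift ab c square
    exact ⟨d, (Category.assoc _ _ _).symm, (Category.assoc _ _ _).symm, rfl⟩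

theorem exists_relStr_isCommaSq {X Y Z : C} (f : X ⟶ Y) (g : Z ⟶ Y) :
    ∃ R : RelStr X Z, IsCommaSq f g R.obj R.p R.q := by
  obtain ⟨P, p, q, hP⟩ := HasIdealCalculus.hasCommaObjects f g
  exact ⟨⟨P, p, q, fun _ _ => hP.lift_ord, fun _ _ => hP.hom_ext⟩, hP⟩

theorem exists_isCompositeRel {X Y Z : C} (R : RelStr X Y) (S : RelStr Y Z) :
    ∃ T : RelStr X Z, IsCompositeRel R S T := by
  obtain ⟨P, p₁, p₂, hP⟩ := HasIdealCalculus.has2Pullbacks R.q S.p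
  obtain ⟨Q, fst, snd, hQ⟩ := HasIdealCalculus.has2Products X Z
  obtain ⟨w, ⟨hwp, hwq⟩, -⟩ := hQ.lift (p₁ ≫ R.p) (p₂ ≫ S.q)
  obtain ⟨I, e, m, he, hm, rfl⟩ := HasIdealCalculus.fact w
  rw [Category.assoc] at hwp hwq
  exact ⟨.ofFFMono hQ m hm, P, p₁, p₂, e, hP, he, hwp, hwq⟩

namespace IsCompositeRel

theorem exists_of_mem {X Y Z : C} {R : RelStr X Y} {S : RelStr Y Z} {T : RelStr X Z}
    (hT : IsCompositeRel R S T) {A : C} {x : A ⟶ X} {z : A ⟶ Z} (h : T.Mem x z) :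
    ∃ (B : C) (c : B ⟶ A) (y : B ⟶ Y), IsSO c ∧ R.Mem (c ≫ x) y ∧ S.Mem y (c ≫ z) := by
  obtain ⟨P, p₁, p₂, e, hP, he, hep, heq⟩ := hT
  obtain ⟨k, rfl, rfl⟩ := h
  obtain ⟨B, c, d, hB⟩ := HasIdealCalculus.has2Pullbacks k e
  refine ⟨B, c, d ≫ p₁ ≫ R.q, HasIdealCalculus.so_pullback_stable _ _ _ _ hB he,
    ⟨d ≫ p₁, ?_, Category.assoc _ _ _⟩, ⟨d ≫ p₂, ?_, ?_⟩⟩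
  · rw [Category.assoc, ← hep, reassoc_of% hB.comm]
  · rw [Category.assoc, hP.comm]
  · rw [Category.assoc, ← heq, reassoc_of% hB.comm]

theorem sub_iff {X Y Z : C} {R : RelStr X Y} {S : RelStr Y Z} {T U : RelStr X Z}
    (hT : IsCompositeRel R S T) :
    T.Sub U ↔
      ∀ {A : C} {x : A ⟶ X} {y : A ⟶ Y} {z : A ⟶ Z}, R.Mem x y → S.Mem y z → U.Mem x z := by
  refine ⟨fun h _ _ _ _ hxy hyz => h.mem (hT.mem hxy hyz),
    fun h => RelStr.sub_of_forall_mem fun k => ?_⟩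
  obtain ⟨B, c, y, hc, hR, hS⟩ := hT.exists_of_mem ⟨k, rfl, rfl⟩
  exact U.mem_of_isSO hc (h hR hS)

theorem isIdealRel {X Y Z : C} {R : RelStr X Y} {S : RelStr Y Z} {T : RelStr X Z}
    (hT : IsCompositeRel R S T) (hR : IsIdealRel R) (hS : IsIdealRel S) : IsIdealRel T := by
  intro A x x' z z' hx h hz
  obtain ⟨B, c, y, hc, hxy, hyz⟩ := hT.exists_of_mem h
  exact T.mem_of_isSO hc (hT.mem (hR _ _ _ _ (hx.precomp c) hxy (.refl y))
    (hS _ _ _ _ (.refl y) hyz (hz.precomp c)))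

end IsCompositeRel

theorem transitiveRel_iff {X : C} {R : RelStr X X} :
    TransitiveRel R ↔
      ∀ {A : C} {x y z : A ⟶ X}, R.Mem x y → R.Mem y z → R.Mem x z := by
  refine ⟨fun h => ?_, fun h _ hT => hT.sub_iff.2 h⟩
  obtain ⟨T, hT⟩ := exists_isCompositeRel R R
  exact hT.sub_iff.1 (h T hT)

theorem IsKernelRel.isCongruence {X Y : C} {f : X ⟶ Y} {K : RelStr X X} (hK : IsKernelRel f K) :
    IsCongruence K := by
  refine ⟨fun a a' b b' ha hab hb => ?_, hK.mem_iff.2 (.refl _),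
    transitiveRel_iff.2 fun hab hbc => hK.mem_iff.2 ((hK.mem_iff.1 hab).trans (hK.mem_iff.1 hbc))⟩
  exact hK.mem_iff.2 (((ha.postcomp f).trans (hK.mem_iff.1 hab)).trans (hb.postcomp f))

theorem IsKernelRel.effectiveCongruence {X Y : C} {f : X ⟶ Y} {K : RelStr X X}
    (hK : IsKernelRel f K) : EffectiveCongruence K := by
  obtain ⟨F, hF : IsStarRel f F⟩ := exists_relStr_isCommaSq f (𝟙 Y)
  obtain ⟨G, hG : IsCostarRel f G⟩ := exists_relStr_isCommaSq (𝟙 Y) f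
  obtain ⟨T, hT⟩ := exists_isCompositeRel F G
  refine ⟨Y, f, F, G, T, hF, hG, hT, RelStr.sub_of_forall_mem fun k => ?_, hT.sub_iff.2 ?_⟩
  · exact hT.mem (hF.mem_iff.2 (.refl _)) (hG.mem_iff.2 (hK.mem_iff.1 ⟨k, rfl, rfl⟩))
  · intro A a y b hay hyb
    exact hK.mem_iff.2 ((hF.mem_iff.1 hay).trans (hG.mem_iff.1 hyb))

namespace IsUpperStarRel

theorem exists_of_mem {X Y : C} {D : RelStr X Y} {E : RelStr Y X} (hE : IsUpperStarRel D E)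
    {A : C} {y : A ⟶ Y} {x : A ⟶ X} (h : E.Mem y x) :
    ∃ (B : C) (c : B ⟶ A) (b : B ⟶ D.obj), IsSO c ∧ c ≫ y ≼ b ≫ D.q ∧ b ≫ D.p ≼ c ≫ x := by
  obtain ⟨F, G, hF, hG, hGF⟩ := hE
  obtain ⟨B, c, b, hc, hyb, hbx⟩ := hGF.exists_of_mem h
  exact ⟨B, c, b, hc, hG.mem_iff.1 hyb, hF.mem_iff.1 hbx⟩

theorem composite_sub_iff {X Y : C} {D : RelStr X Y} {E : RelStr Y X} {U : RelStr X X}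
    {V : RelStr X Y} (hE : IsUpperStarRel D E) (hU : IsCompositeRel D E U)
    (hV : IsCompositeRel U D V) : V.Sub D ↔ OrdDifunctional D := by
  constructor
  · rintro h A x u u' y y' v hxy hy ⟨b, rfl, rfl⟩ hu huv
    exact h.mem (hV.mem (hU.mem hxy (hE.mem hy hu)) huv)
  · refine fun hD => hV.sub_iff.2 fun {A x u v} hxu huv => ?_
    obtain ⟨B, c, y, hc, hxy, hyu⟩ := hU.exists_of_mem hxu
    obtain ⟨B', c', b, hc', hyb, hbu⟩ := hE.exists_of_mem hyu
    refine D.mem_of_isSO hc (D.mem_of_isSO hc' ?_)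
    exact hD _ _ _ _ _ _ (hxy.precomp c') hyb ⟨b, rfl, rfl⟩ hbu ((huv.precomp c).precomp c')

theorem composite_iso_iff {X Y : C} {D : RelStr X Y} {E : RelStr Y X} {U : RelStr X X}
    {V : RelStr X Y} (hE : IsUpperStarRel D E) (hU : IsCompositeRel D E U)
    (hV : IsCompositeRel U D V) : V.Iso D ↔ OrdDifunctional D :=
  (and_iff_left (hE.sub_composite hU hV)).trans (hE.composite_sub_iff hU hV)

end IsUpperStarRel

theorem exists_isUpperStarRel {X Y : C} (D : RelStr X Y) :
    ∃ E : RelStr Y X, IsUpperStarRel D E := by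
  obtain ⟨F, hF⟩ := exists_relStr_isCommaSq D.p (𝟙 X)
  obtain ⟨G, hG⟩ := exists_relStr_isCommaSq (𝟙 Y) D.q
  obtain ⟨E, hE⟩ := exists_isCompositeRel G F
  exact ⟨E, F, G, hF, hG, hE⟩

theorem OrdDifunctional.transitiveRel {X : C} {R : RelStr X X} (hR : OrdDifunctional R)
    (hrefl : ReflexiveRel R) : TransitiveRel R :=
  transitiveRel_iff.2 fun hxy hyz =>
    hR _ _ _ _ _ _ hxy (.refl _) (hrefl.mem _) (.refl _) hyz

theorem IsRelPullback.ordDifunctional {X Y : C} {D : RelStr X Y} {R : RelStr D.obj D.obj}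
    (hR : IsRelPullback D D.p D.q R) (hD : IsIdealRel D) (htrans : TransitiveRel R) :
    OrdDifunctional D := by
  rintro A _ _ _ _ _ _ ⟨a, rfl, rfl⟩ hab ⟨b, rfl, rfl⟩ hbd ⟨d, rfl, rfl⟩
  have mem_ab : R.Mem a b := hR.mem_iff.2 (hD _ _ _ _ (.refl _) ⟨a, rfl, rfl⟩ hab)
  have mem_bd : R.Mem b d := hR.mem_iff.2 (hD _ _ _ _ hbd ⟨d, rfl, rfl⟩ (.refl _))
  exact hR.mem_iff.1 (transitiveRel_iff.1 htrans mem_ab mem_bd)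

theorem ordDifunctional_of_kernel_composite_sub {X Y : C} {D : RelStr X Y}
    {K L T T' : RelStr D.obj D.obj} (hD : IsIdealRel D) (hK : IsKernelRel D.p K)
    (hL : IsKernelRel D.q L) (hT : IsCompositeRel K L T) (hT' : IsCompositeRel L K T')
    (hsub : T'.Sub T) : OrdDifunctional D := by
  rintro A _ _ _ _ _ _ ⟨a, rfl, rfl⟩ hab ⟨b, rfl, rfl⟩ hbd ⟨d, rfl, rfl⟩
  have mem_ad : T.Mem a d := hsub.mem (hT'.mem (hL.mem_iff.2 hab) (hK.mem_iff.2 hbd))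
  obtain ⟨B, c, w, hc, haw, hwd⟩ := hT.exists_of_mem mem_ad
  refine D.mem_of_isSO hc (hD _ _ _ _ ?_ ⟨w, rfl, rfl⟩ ?_)
  · simpa only [Category.assoc] using hK.mem_iff.1 haw
  · simpa only [Category.assoc] using hL.mem_iff.1 hwd

theorem IsCompositeRel.sub_of_transitiveRel {X : C} {R S T T' : RelStr X X}
    (hT' : IsCompositeRel R S T') (hT : IsCompositeRel S R T) (hR : ReflexiveRel R)
    (hS : ReflexiveRel S) (htrans : TransitiveRel T) : T'.Sub T :=
  hT'.sub_iff.2 fun hxy hyz =>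
    transitiveRel_iff.1 htrans (hT.mem (hS.mem _) hxy) (hT.mem hyz (hR.mem _))

theorem ReflexiveIdealsAreCongruences.congruencesCompose (h : ReflexiveIdealsAreCongruences C) :
    CongruencesCompose C :=
  fun X _ _ hR hS T hT => h X T (hT.isIdealRel hS.1 hR.1) (hT.mem hS.2.1 hR.2.1)

theorem CongruencesCompose.congruencesPermute (h : CongruencesCompose C) :
    CongruencesPermute C :=
  fun X R S hR hS T T' hT hT' =>
    ⟨hT.sub_of_transitiveRel hT' hS.2.1 hR.2.1 (h X S R hS hR T' hT').2.2,
      hT'.sub_of_transitiveRel hT hR.2.1 hS.2.1 (h X R S hR hS T hT).2.2⟩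

theorem EffectiveCongruencesPermute.isOrdMaltsev (h : EffectiveCongruencesPermute C) :
    IsOrdMaltsev C := by
  intro X Y D hD A
  obtain ⟨K, hK : IsKernelRel D.p K⟩ := exists_relStr_isCommaSq D.p D.p
  obtain ⟨L, hL : IsKernelRel D.q L⟩ := exists_relStr_isCommaSq D.q D.q
  obtain ⟨T, hT⟩ := exists_isCompositeRel K L
  obtain ⟨T', hT'⟩ := exists_isCompositeRel L K
  have permute : T.Iso T' := h D.obj L K hL.isCongruence hL.effectiveCongruence
    hK.isCongruence hK.effectiveCongruence T T' hT hT'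
  exact ordDifunctional_of_kernel_composite_sub hD hK hL hT hT' permute.2

theorem idealsDifunctional_iff_isOrdMaltsev : IdealsDifunctional C ↔ IsOrdMaltsev C := by
  constructor
  · intro h X Y D hD A
    obtain ⟨E, F, G, hF, hG, hGF⟩ := exists_isUpperStarRel D
    have hE : IsUpperStarRel D E := ⟨F, G, hF, hG, hGF⟩
    obtain ⟨U, hU⟩ := exists_isCompositeRel D E
    obtain ⟨V, hV⟩ := exists_isCompositeRel U D
    exact (hE.composite_iso_iff hU hV).1 (h X Y D hD F G E U V hF hG hGF hU hV)
  · intro h X Y D hD F G E U V hF hG hGF hU hV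
    have hE : IsUpperStarRel D E := ⟨F, G, hF, hG, hGF⟩
    exact (hE.composite_iso_iff hU hV).2 (h X Y D hD)

theorem reflexiveIdealsAreCongruences_iff_isOrdMaltsev :
    ReflexiveIdealsAreCongruences C ↔ IsOrdMaltsev C := by
  constructor
  · intro h X Y D hD A
    obtain ⟨R, hR⟩ := exists_isRelPullback D D.p D.q
    have hrefl : ReflexiveRel R := hR.mem_iff.2 ⟨𝟙 D.obj, rfl, rfl⟩
    exact hR.ordDifunctional hD (h D.obj R (hR.isIdealRel hD) hrefl).2.2
  · exact fun h X R hR hrefl => ⟨hR, hrefl, OrdDifunctional.transitiveRel (h X X R hR) hrefl⟩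

end

theorem statement15_general [HasIdealCalculus C] :
    List.TFAE [CongruencesCompose C, CongruencesPermute C, EffectiveCongruencesPermute C,
      IdealsDifunctional C, ReflexiveIdealsAreCongruences C, IsOrdMaltsev C] := by
  tfae_have 1 → 2 := CongruencesCompose.congruencesPermute
  tfae_have 2 → 3 := fun h X R S hR _ hS _ => h X R S hR hS
  tfae_have 3 → 6 := EffectiveCongruencesPermute.isOrdMaltsev
  tfae_have 4 ↔ 6 := idealsDifunctional_iff_isOrdMaltsev
  tfae_have 5 ↔ 6 := reflexiveIdealsAreCongruences_iff_isOrdMaltsev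
  tfae_have 5 → 1 := ReflexiveIdealsAreCongruences.congruencesCompose
  tfae_finish

/-- The characterisations of regular `Ord`-Mal'tsev categories. -/
theorem statement15 (hC : IsRegularOrd C) :
    (CongruencesCompose C ↔ CongruencesPermute C) ∧
    (CongruencesPermute C ↔ EffectiveCongruencesPermute C) ∧
    (EffectiveCongruencesPermute C ↔ IdealsDifunctional C) ∧
    (IdealsDifunctional C ↔ ReflexiveIdealsAreCongruences C) ∧
    (ReflexiveIdealsAreCongruences C ↔ IsOrdMaltsev C) := by
  have tfae := @statement15_general C _ _ hC.hasIdealCalculus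
  exact ⟨tfae.out 0 1, tfae.out 1 2, tfae.out 2 3, tfae.out 3 4, tfae.out 4 5⟩

end Statement15
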